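/- Let H be a quasi-Hopf algebra, B a right H-comodule algebra, and v : H → B a morphism of right H-comodule algebras. Define E : B → B by E(b) = v(q¹)b₍₀₎v(βS(q²b₍₁₎)), set A = E(B), h▷b = E(v(h)b), and a*a′ = E(aa′) for a, a′ ∈ A. Then for all a, a′ ∈ A and h, h′ ∈ H: ((x¹▷a)*(x²h₁▷a′))·v(x³h₂h′) = a·v(h)·a′·v(h′) in B. In other words, the map Ψ : A#H → B, Ψ(a#h) = a v(h), is multiplicative. -/

import Mathlib

open TensorProduct BigOperators

/-- A quasi-bialgebra in the sense of Drinfeld. -/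
structure QuasiBialgebra (k H : Type*) [Field k] [Ring H] [Algebra k H] where
  comul : H →ₐ[k] H ⊗[k] H
  counit : H →ₐ[k] k
  Phi : H ⊗[k] (H ⊗[k] H)
  PhiInv : H ⊗[k] (H ⊗[k] H)
  Phi_mul_inv : Phi * PhiInv = 1
  inv_mul_Phi : PhiInv * Phi = 1
  comul_coassoc : ∀ h : H,
    (Algebra.TensorProduct.map (AlgHom.id k H) comul) (comul h)
      = Phi * (Algebra.TensorProduct.assoc k k k H H H)
          ((Algebra.TensorProduct.map comul (AlgHom.id k H)) (comul h)) * PhiInv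
  counit_comul_right : ∀ h : H,
    (Algebra.TensorProduct.map (AlgHom.id k H) counit) (comul h) = h ⊗ₜ[k] (1 : k)
  counit_comul_left : ∀ h : H,
    (Algebra.TensorProduct.map counit (AlgHom.id k H)) (comul h) = (1 : k) ⊗ₜ[k] h
  pentagon :
    ((1 : H) ⊗ₜ[k] Phi)
      * (Algebra.TensorProduct.map (AlgHom.id k H)
          (((Algebra.TensorProduct.assoc k k k H H H).toAlgHom).comp
            (Algebra.TensorProduct.map comul (AlgHom.id k H)))) Phi
      * (Algebra.TensorProduct.map (AlgHom.id k H)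
          (Algebra.TensorProduct.map (AlgHom.id k H)
            (Algebra.TensorProduct.includeLeft : H →ₐ[k] H ⊗[k] H))) Phi
    = (Algebra.TensorProduct.map (AlgHom.id k H)
          (Algebra.TensorProduct.map (AlgHom.id k H) comul)) Phi
      * (Algebra.TensorProduct.assoc k k k H H (H ⊗[k] H))
          ((Algebra.TensorProduct.map comul (AlgHom.id k (H ⊗[k] H))) Phi)
  counit_Phi : (Algebra.TensorProduct.map (AlgHom.id k H)
      (Algebra.TensorProduct.map counit (AlgHom.id k H))) Phi = 1

/-- A quasi-Hopf algebra: a quasi-bialgebra with antipode `S` (a bijective algebra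
anti-automorphism with inverse `Sinv`) and elements `alpha`, `beta`, normalized so that
`counit alpha = counit beta = 1`.  Identities involving Sweedler components are stated
universally over all finite representations of the relevant tensors. -/
structure QuasiHopfAlgebra (k H : Type*) [Field k] [Ring H] [Algebra k H] extends
    QuasiBialgebra k H where
  alpha : H
  beta : H
  S : H →ₗ[k] H
  Sinv : H →ₗ[k] H
  S_one : S 1 = 1
  S_mul : ∀ a b : H, S (a * b) = S b * S a
  Sinv_S : ∀ h : H, Sinv (S h) = h
  S_Sinv : ∀ h : H, S (Sinv h) = h
  antipode_left : ∀ h : H, ∀ (n : ℕ) (d1 d2 : Fin n → H),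
    comul h = ∑ i, d1 i ⊗ₜ[k] d2 i →
    ∑ i, S (d1 i) * alpha * d2 i = counit h • alpha
  antipode_right : ∀ h : H, ∀ (n : ℕ) (d1 d2 : Fin n → H),
    comul h = ∑ i, d1 i ⊗ₜ[k] d2 i →
    ∑ i, d1 i * beta * S (d2 i) = counit h • beta
  antipode_Phi : ∀ (n : ℕ) (X1 X2 X3 : Fin n → H),
    Phi = ∑ i, X1 i ⊗ₜ[k] (X2 i ⊗ₜ[k] X3 i) →
    ∑ i, X1 i * beta * S (X2 i) * alpha * X3 i = 1
  antipode_PhiInv : ∀ (n : ℕ) (x1 x2 x3 : Fin n → H),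
    PhiInv = ∑ i, x1 i ⊗ₜ[k] (x2 i ⊗ₜ[k] x3 i) →
    ∑ i, S (x1 i) * alpha * x2 i * beta * S (x3 i) = 1
  counit_alpha : counit alpha = 1
  counit_beta : counit beta = 1
/-- A right `H`-comodule algebra over a quasi-bialgebra `Q`. -/
structure RightComoduleAlgebra {k H : Type*} [Field k] [Ring H] [Algebra k H]
    (Q : QuasiBialgebra k H) (B : Type*) [Ring B] [Algebra k B] where
  coact : B →ₐ[k] B ⊗[k] H
  PhiRho : B ⊗[k] (H ⊗[k] H)
  PhiRhoInv : B ⊗[k] (H ⊗[k] H)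
  PhiRho_mul_inv : PhiRho * PhiRhoInv = 1
  inv_mul_PhiRho : PhiRhoInv * PhiRho = 1
  coact_coassoc : ∀ b : B,
    PhiRho * (Algebra.TensorProduct.assoc k k k B H H)
        ((Algebra.TensorProduct.map coact (AlgHom.id k H)) (coact b))
      = (Algebra.TensorProduct.map (AlgHom.id k B) Q.comul) (coact b) * PhiRho
  pentagon :
    ((1 : B) ⊗ₜ[k] Q.Phi)
      * (Algebra.TensorProduct.map (AlgHom.id k B)
          (((Algebra.TensorProduct.assoc k k k H H H).toAlgHom).comp
            (Algebra.TensorProduct.map Q.comul (AlgHom.id k H)))) PhiRho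
      * (Algebra.TensorProduct.map (AlgHom.id k B)
          (Algebra.TensorProduct.map (AlgHom.id k H)
            (Algebra.TensorProduct.includeLeft : H →ₐ[k] H ⊗[k] H))) PhiRho
    = (Algebra.TensorProduct.map (AlgHom.id k B)
          (Algebra.TensorProduct.map (AlgHom.id k H) Q.comul)) PhiRho
      * (Algebra.TensorProduct.assoc k k k B H (H ⊗[k] H))
          ((Algebra.TensorProduct.map coact (AlgHom.id k (H ⊗[k] H))) PhiRho)
  counit_coact : ∀ b : B,
    (Algebra.TensorProduct.map (AlgHom.id k B) Q.counit) (coact b) = b ⊗ₜ[k] (1 : k)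
  counit_PhiRho_mid : (Algebra.TensorProduct.map (AlgHom.id k B)
      (Algebra.TensorProduct.map Q.counit (AlgHom.id k H))) PhiRho = 1
  counit_PhiRho_right : (Algebra.TensorProduct.map (AlgHom.id k B)
      (Algebra.TensorProduct.map (AlgHom.id k H) Q.counit)) PhiRho = 1

/-- `v : H → B` is a morphism of right `H`-comodule algebras from `H` (with its canonical
right `H`-comodule algebra structure `ρ = Δ`, `Φ_ρ = Φ`) to `B`. -/
def IsComodAlgMorphismFromH {k H B : Type*} [Field k] [Ring H] [Algebra k H]
    [Ring B] [Algebra k B] {Q : QuasiBialgebra k H}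
    (R : RightComoduleAlgebra Q B) (v : H →ₐ[k] B) : Prop :=
  (∀ h : H, R.coact (v h) = (Algebra.TensorProduct.map v (AlgHom.id k H)) (Q.comul h))
  ∧ R.PhiRho = (Algebra.TensorProduct.map v (AlgHom.id k (H ⊗[k] H))) Q.Phi

/-- Characterization of the canonical projection `E : B → B`,
`E(b) = v(q¹) b₍₀₎ v(β S(q² b₍₁₎))`, where `q_R = q¹ ⊗ q² = X¹ ⊗ S⁻¹(α X³) X²`,
stated universally over finite representations of `Φ` and of `ρ(b)`. -/
def IsCanonicalProjection {k H B : Type*} [Field k] [Ring H] [Algebra k H]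
    [Ring B] [Algebra k B] (Q : QuasiHopfAlgebra k H)
    (R : RightComoduleAlgebra Q.toQuasiBialgebra B) (v : H →ₐ[k] B) (E : B →ₗ[k] B) : Prop :=
  ∀ (b : B) (n : ℕ) (X1 X2 X3 : Fin n → H),
    Q.Phi = ∑ i, X1 i ⊗ₜ[k] (X2 i ⊗ₜ[k] X3 i) →
    ∀ (p : ℕ) (b0 : Fin p → B) (b1 : Fin p → H),
      R.coact b = ∑ j, b0 j ⊗ₜ[k] b1 j →
      E b = ∑ i, ∑ j,
        v (X1 i) * b0 j * v (Q.beta * Q.S (Q.Sinv (Q.alpha * X3 i) * X2 i * b1 j))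

/-!
Write `ρ(b) = b₀ ⊗ b₁`. The projection `E` satisfies two exchange rules: `E(b v(h)) = ε(h) E(b)`,
because of the antipode axiom for `β`, and `c E(b) = E(c₀ b) v(c₁)`, because of coassociativity
and the antipode axiom for `α`. As `E(1) = 1`, the second rule gives `b = E(b₀) v(b₁)`; together
they give `E(E(b)) = E(b)` and `E(c E(b)) = E(c b)`.

The pentagon axiom for `Φ_ρ` enters only through `E(a₀) ⊗ a₁ = a ⊗ 1` for `a = E(b)`. Combined
with coassociativity it yields `ρ(a) = E(v(x¹) a) v(x²) ⊗ x³`, so that for `a' = E(a')`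
`a v(h) a' = E(a₀ v(h₁) a') v(a₁ h₂) = E(E(v(x¹) a) v(x² h₁) a') v(x³ h₂)`,
where `v(x² h₁) a'` may be replaced by its image under `E`.
-/

section Development

open Algebra.TensorProduct (includeLeft)

variable {k A B H M N P X Y Z : Type*} [Field k]
  [AddCommGroup M] [Module k M] [AddCommGroup N] [Module k N] [AddCommGroup P] [Module k P]
  [Ring A] [Algebra k A] [Ring B] [Algebra k B] [Ring H] [Algebra k H]
  [Ring X] [Algebra k X] [Ring Y] [Algebra k Y] [Ring Z] [Algebra k Z]

local notation:max "id[" A "]⊗" f:max => Algebra.TensorProduct.map (AlgHom.id k A) f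

theorem exists_eq_sum_tmul_tmul (t : M ⊗[k] (N ⊗[k] P)) :
    ∃ (n : ℕ) (a : Fin n → M) (b : Fin n → N) (c : Fin n → P),
      t = ∑ i, a i ⊗ₜ[k] (b i ⊗ₜ[k] c i) := by
  obtain ⟨n, a, u, rfl⟩ := TensorProduct.exists_sum_tmul_eq t
  choose m b c hu using fun i ↦ TensorProduct.exists_sum_tmul_eq (u i)
  refine ⟨∑ i, m i, fun j ↦ a (finSigmaFinEquiv.symm j).1,
    fun j ↦ b _ (finSigmaFinEquiv.symm j).2, fun j ↦ c _ (finSigmaFinEquiv.symm j).2, ?_⟩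
  simp_rw [hu, TensorProduct.tmul_sum]
  exact ((finSigmaFinEquiv.symm.sum_comp fun p ↦ a p.1 ⊗ₜ[k] (b p.1 p.2 ⊗ₜ[k] c p.1 p.2)).trans
    (Fintype.sum_sigma _)).symm

/-- For `f : A → B ⊗ H`, for instance a coaction or a comultiplication, the map `f ⊗ id_X` with
target reassociated to `B ⊗ (H ⊗ X)`. -/
noncomputable def rTensorAssoc (f : A →ₐ[k] B ⊗[k] H) (X : Type*) [Ring X] [Algebra k X] :
    A ⊗[k] X →ₐ[k] B ⊗[k] (H ⊗[k] X) :=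
  (Algebra.TensorProduct.assoc k k k B H X).toAlgHom.comp
    (Algebra.TensorProduct.map f (AlgHom.id k X))

theorem rTensorAssoc_tmul (f : A →ₐ[k] B ⊗[k] H) (a : A) (x : X) :
    rTensorAssoc f X (a ⊗ₜ x) = Algebra.TensorProduct.assoc k k k B H X (f a ⊗ₜ x) := by
  simp [rTensorAssoc]

theorem rTensorAssoc_tmul_one (f : A →ₐ[k] B ⊗[k] H) (a : A) :
    rTensorAssoc f X (a ⊗ₜ 1) = id[B]⊗includeLeft (f a) := by
  rw [rTensorAssoc_tmul]
  induction f a with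
  | zero => simp
  | add s t hs ht => simp only [map_add, TensorProduct.add_tmul, hs, ht]
  | tmul b h => simp

theorem rTensorAssoc_one_tmul (f : A →ₐ[k] B ⊗[k] H) (x : X) :
    rTensorAssoc f X (1 ⊗ₜ x) = 1 ⊗ₜ (1 ⊗ₜ x) := by
  rw [rTensorAssoc_tmul, map_one, Algebra.TensorProduct.one_def, Algebra.TensorProduct.assoc_tmul]

theorem lTensor_lTensor_rTensorAssoc (f : A →ₐ[k] B ⊗[k] H) (g : X →ₐ[k] Y) (t : A ⊗[k] X) :
    id[B]⊗(id[H]⊗g) (rTensorAssoc f X t) = rTensorAssoc f Y (id[A]⊗g t) := by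
  induction t with
  | zero => simp
  | add s t hs ht => simp only [map_add, hs, ht]
  | tmul a x =>
    simp only [rTensorAssoc_tmul, Algebra.TensorProduct.map_tmul, AlgHom.id_apply]
    induction f a with
    | zero => simp
    | add s t hs ht => simp only [map_add, TensorProduct.add_tmul, hs, ht]
    | tmul b h => simp

theorem map_lTensor_mul_one_tmul_mul_lTensor (F : A →ₗ[k] M) {L : X →ₗ[k] Y}
    {f g : Z →ₐ[k] X} {f' g' : Z →ₐ[k] Y} {x : X}
    (h : ∀ z w, L (f z * x * g w) = f' z * g' w) (s t : A ⊗[k] Z) :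
    TensorProduct.map F L (id[A]⊗f s * (1 ⊗ₜ x) * id[A]⊗g t)
      = F.rTensor Y (id[A]⊗f' s * id[A]⊗g' t) := by
  induction s with
  | zero => simp
  | add s s' hs hs' => simp only [map_add, add_mul, hs, hs']
  | tmul a z =>
    induction t with
    | zero => simp
    | add t t' ht ht' => simp only [map_add, mul_add, ht, ht']
    | tmul b w => simp [h]

namespace QuasiBialgebra

variable (Q : QuasiBialgebra k H)

/-- The map `ε ⊗ id : H ⊗ X → X`. -/
noncomputable def counitLeft (X : Type*) [Ring X] [Algebra k X] : H ⊗[k] X →ₐ[k] X :=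
  (Algebra.TensorProduct.lid k X).toAlgHom.comp
    (Algebra.TensorProduct.map Q.counit (AlgHom.id k X))

/-- The map `id ⊗ ε : X ⊗ H → X`. -/
noncomputable def counitRight (X : Type*) [Ring X] [Algebra k X] : X ⊗[k] H →ₐ[k] X :=
  (Algebra.TensorProduct.rid k k X).toAlgHom.comp id[X]⊗Q.counit

@[simp]
theorem counitLeft_tmul (h : H) (x : X) : Q.counitLeft X (h ⊗ₜ x) = Q.counit h • x := by
  simp [counitLeft]

@[simp]
theorem counitRight_tmul (x : X) (h : H) : Q.counitRight X (x ⊗ₜ h) = Q.counit h • x := by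
  simp [counitRight]

theorem counitLeft_comul (h : H) : Q.counitLeft H (Q.comul h) = h := by
  simpa [counitLeft] using congrArg (Algebra.TensorProduct.lid k H) (Q.counit_comul_left h)

theorem counitRight_comul (h : H) : Q.counitRight H (Q.comul h) = h := by
  simpa [counitRight] using congrArg (Algebra.TensorProduct.rid k k H) (Q.counit_comul_right h)

theorem counitLeft_lTensor (f : X →ₐ[k] Y) (t : H ⊗[k] X) :
    Q.counitLeft Y (id[H]⊗f t) = f (Q.counitLeft X t) := by
  induction t with
  | zero => simp
  | add s t hs ht => simp only [map_add, hs, ht]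
  | tmul h x => simp

theorem counitRight_rTensor (F : X →ₗ[k] Y) (t : X ⊗[k] H) :
    Q.counitRight Y (F.rTensor H t) = F (Q.counitRight X t) := by
  induction t with
  | zero => simp
  | add s t hs ht => simp only [map_add, hs, ht]
  | tmul x h => simp

theorem counitLeft_rTensorAssoc_comul (t : H ⊗[k] X) :
    Q.counitLeft (H ⊗[k] X) (rTensorAssoc Q.comul X t) = t := by
  have counitLeft_assoc (s : H ⊗[k] H) (x : X) :
      Q.counitLeft (H ⊗[k] X) (Algebra.TensorProduct.assoc k k k H H X (s ⊗ₜ x))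
        = Q.counitLeft H s ⊗ₜ x := by
    induction s with
    | zero => simp
    | add s t hs ht => simp only [map_add, TensorProduct.add_tmul, hs, ht]
    | tmul h g => simp [TensorProduct.smul_tmul']
  induction t with
  | zero => simp
  | add s t hs ht => simp only [map_add, hs, ht]
  | tmul h x => rw [rTensorAssoc_tmul, counitLeft_assoc, counitLeft_comul]

theorem lTensor_counitLeft_rTensorAssoc {f : A →ₐ[k] A ⊗[k] H}
    (hf : ∀ a, Q.counitRight A (f a) = a) (t : A ⊗[k] X) :
    id[A]⊗(Q.counitLeft X) (rTensorAssoc f X t) = t := by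
  have lTensor_assoc (s : A ⊗[k] H) (x : X) :
      id[A]⊗(Q.counitLeft X) (Algebra.TensorProduct.assoc k k k A H X (s ⊗ₜ x))
        = Q.counitRight A s ⊗ₜ x := by
    induction s with
    | zero => simp
    | add s t hs ht => simp only [map_add, TensorProduct.add_tmul, hs, ht]
    | tmul a h => simp [TensorProduct.smul_tmul']
  induction t with
  | zero => simp
  | add s t hs ht => simp only [map_add, hs, ht]
  | tmul a x => rw [rTensorAssoc_tmul, lTensor_assoc, hf]

theorem lTensor_counitLeft_Phi : id[H]⊗(Q.counitLeft H) Q.Phi = 1 := by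
  rw [counitLeft, Algebra.TensorProduct.map_id_comp, AlgHom.comp_apply, Q.counit_Phi,
    map_one]

theorem pentagon_rTensorAssoc :
    (1 ⊗ₜ Q.Phi) * id[H]⊗(rTensorAssoc Q.comul H) Q.Phi
        * id[H]⊗(id[H]⊗includeLeft) Q.Phi
      = id[H]⊗(id[H]⊗Q.comul) Q.Phi * rTensorAssoc Q.comul (H ⊗[k] H) Q.Phi :=
  Q.pentagon

theorem lTensor_counitLeft_lTensor_lTensor (f : X →ₐ[k] Y) (t : A ⊗[k] (H ⊗[k] X)) :
    id[A]⊗(Q.counitLeft Y) (id[A]⊗(id[H]⊗f) t) = id[A]⊗f (id[A]⊗(Q.counitLeft X) t) := by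
  induction t with
  | zero => simp
  | add s t hs ht => simp only [map_add, hs, ht]
  | tmul a u => simp [counitLeft_lTensor]

theorem lTensor_counitLeft_lTensor_rTensorAssoc (t : A ⊗[k] (H ⊗[k] X)) :
    id[A]⊗(Q.counitLeft (H ⊗[k] X)) (id[A]⊗(rTensorAssoc Q.comul X) t) = t := by
  induction t with
  | zero => simp
  | add s t hs ht => simp only [map_add, hs, ht]
  | tmul a u => simp [counitLeft_rTensorAssoc_comul]

theorem counitLeft_Phi : Q.counitLeft (H ⊗[k] H) Q.Phi = 1 := by
  have one_tmul_mul_Phi : (1 ⊗ₜ Q.counitLeft (H ⊗[k] H) Q.Phi) * Q.Phi = Q.Phi := by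
    have h := congrArg id[H]⊗(Q.counitLeft (H ⊗[k] H)) Q.pentagon_rTensorAssoc
    rwa [map_mul, map_mul, map_mul, Algebra.TensorProduct.map_tmul, map_one,
      lTensor_counitLeft_lTensor_rTensorAssoc, lTensor_counitLeft_lTensor_lTensor,
      lTensor_counitLeft_lTensor_lTensor, lTensor_counitLeft_Phi, map_one, map_one, mul_one,
      one_mul, Q.lTensor_counitLeft_rTensorAssoc Q.counitRight_comul] at h
  have one_tmul_eq_one : (1 : H) ⊗ₜ[k] Q.counitLeft (H ⊗[k] H) Q.Phi = 1 := by
    simpa only [mul_assoc, Q.Phi_mul_inv, mul_one] using congrArg (· * Q.PhiInv) one_tmul_mul_Phi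
  simpa using congrArg (Q.counitLeft (H ⊗[k] H)) one_tmul_eq_one

end QuasiBialgebra

namespace QuasiHopfAlgebra

variable (Q : QuasiHopfAlgebra k H)

/-- The evaluation `h ⊗ g ↦ S(h) α g`. -/
noncomputable def antipodeEval : H ⊗[k] H →ₗ[k] H :=
  LinearMap.mul' k H ∘ₗ TensorProduct.map (LinearMap.mulRight k Q.alpha ∘ₗ Q.S) LinearMap.id

/-- The coevaluation `h ⊗ g ↦ h β S(g)`. -/
noncomputable def antipodeCoeval : H ⊗[k] H →ₗ[k] H :=
  LinearMap.mul' k H ∘ₗ TensorProduct.map (LinearMap.mulRight k Q.beta) Q.S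

/-- The map `b ⊗ h ⊗ g ↦ b v(β S(h) α g)`. -/
noncomputable def contract (v : H →ₐ[k] B) : B ⊗[k] (H ⊗[k] H) →ₗ[k] B :=
  LinearMap.mul' k B ∘ₗ
    (v.toLinearMap ∘ₗ LinearMap.mulLeft k Q.beta ∘ₗ Q.antipodeEval).lTensor B

@[simp]
theorem antipodeEval_tmul (h g : H) : Q.antipodeEval (h ⊗ₜ g) = Q.S h * Q.alpha * g := by
  simp [antipodeEval]

@[simp]
theorem antipodeCoeval_tmul (h g : H) : Q.antipodeCoeval (h ⊗ₜ g) = h * Q.beta * Q.S g := by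
  simp [antipodeCoeval]

@[simp]
theorem contract_tmul (v : H →ₐ[k] B) (b : B) (u : H ⊗[k] H) :
    Q.contract v (b ⊗ₜ u) = b * v (Q.beta * Q.antipodeEval u) := by
  simp [contract]

theorem antipodeEval_comul (h : H) : Q.antipodeEval (Q.comul h) = Q.counit h • Q.alpha := by
  obtain ⟨n, d, e, hde⟩ := TensorProduct.exists_sum_tmul_eq (Q.comul h)
  simpa [hde] using Q.antipode_left h n d e hde

theorem antipodeCoeval_comul (h : H) : Q.antipodeCoeval (Q.comul h) = Q.counit h • Q.beta := by
  obtain ⟨n, d, e, hde⟩ := TensorProduct.exists_sum_tmul_eq (Q.comul h)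
  simpa [hde] using Q.antipode_right h n d e hde

theorem antipodeEval_comul_mul (h : H) (u : H ⊗[k] H) :
    Q.antipodeEval (Q.comul h * u) = Q.counit h • Q.antipodeEval u := by
  have antipodeEval_mul_tmul (w : H ⊗[k] H) (s t : H) :
      Q.antipodeEval (w * (s ⊗ₜ t)) = Q.S s * Q.antipodeEval w * t := by
    induction w with
    | zero => simp
    | add w w' hw hw' => simp only [add_mul, mul_add, map_add, hw, hw']
    | tmul d e => simp [Q.S_mul, mul_assoc]
  induction u with
  | zero => simp
  | add u u' hu hu' => simp only [mul_add, map_add, smul_add, hu, hu']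
  | tmul s t => simp [antipodeEval_mul_tmul, antipodeEval_comul]

theorem contract_lTensor_comul_mul (v : H →ₐ[k] B) (t : B ⊗[k] H) (T : B ⊗[k] (H ⊗[k] H)) :
    Q.contract v (id[B]⊗Q.comul t * T) = Q.counitRight B t * Q.contract v T := by
  induction t with
  | zero => simp
  | add s t hs ht => simp only [map_add, add_mul, hs, ht]
  | tmul c h =>
    induction T with
    | zero => simp
    | add S T hS hT => simp only [map_add, mul_add, hS, hT]
    | tmul b u => simp [antipodeEval_comul_mul, mul_assoc]

theorem contract_mul_map_rTensorAssoc_comul (v : H →ₐ[k] B) (T : B ⊗[k] (H ⊗[k] H))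
    (u : H ⊗[k] H) :
    Q.contract v (T * Algebra.TensorProduct.map v (AlgHom.id k _) (rTensorAssoc Q.comul H u))
      = Q.contract v T * v (Q.counitLeft H u) := by
  have contract_mul_map_assoc (b : B) (s t g : H) (w : H ⊗[k] H) :
      Q.contract v (b ⊗ₜ (s ⊗ₜ t) * Algebra.TensorProduct.map v (AlgHom.id k _)
          (Algebra.TensorProduct.assoc k k k H H H (w ⊗ₜ g)))
        = b * v (Q.antipodeCoeval w * Q.antipodeEval (s ⊗ₜ t) * g) := by
    induction w with
    | zero => simp
    | add w w' hw hw' =>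
      simp only [TensorProduct.add_tmul, mul_add, add_mul, map_add, hw, hw']
    | tmul d e => simp [Q.S_mul, mul_assoc]
  induction u with
  | zero => simp
  | add u u' hu hu' => simp only [mul_add, map_add, hu, hu']
  | tmul h g =>
    rw [rTensorAssoc_tmul]
    induction T with
    | zero => simp
    | add S T hS hT => simp only [add_mul, map_add, hS, hT]
    | tmul b u =>
      induction u with
      | zero => simp
      | add u u' hu hu' => simp only [TensorProduct.tmul_add, add_mul, map_add, hu, hu']
      | tmul s t => simp [contract_mul_map_assoc, antipodeCoeval_comul, mul_assoc]

theorem contract_map_Phi (v : H →ₐ[k] B) :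
    Q.contract v (Algebra.TensorProduct.map v (AlgHom.id k _) Q.Phi) = 1 := by
  obtain ⟨n, x, y, z, hxyz⟩ := exists_eq_sum_tmul_tmul Q.Phi
  simpa [hxyz, mul_assoc] using congrArg v (Q.antipode_Phi n x y z hxyz)

theorem contract_id_lTensor_comul_mul_Phi_mul_rTensorAssoc (z w : H ⊗[k] H) :
    Q.contract (AlgHom.id k H) (id[H]⊗Q.comul z * Q.Phi * rTensorAssoc Q.comul H w)
      = Q.counitRight H z * Q.counitLeft H w := by
  have contract_Phi := Q.contract_map_Phi (AlgHom.id k H)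
  have contract_mul := Q.contract_mul_map_rTensorAssoc_comul (AlgHom.id k H) Q.Phi w
  rw [Algebra.TensorProduct.map_id, AlgHom.id_apply] at contract_Phi contract_mul
  rw [mul_assoc, contract_lTensor_comul_mul, contract_mul, contract_Phi, one_mul, AlgHom.id_apply]

end QuasiHopfAlgebra

section ComoduleAlgebra

variable {Q : QuasiBialgebra k H} (R : RightComoduleAlgebra Q B)

namespace RightComoduleAlgebra

theorem counitRight_coact (b : B) : Q.counitRight B (R.coact b) = b := by
  simpa [QuasiBialgebra.counitRight] using
    congrArg (Algebra.TensorProduct.rid k k B) (R.counit_coact b)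

theorem PhiRho_mul_rTensorAssoc_coact (b : B) :
    R.PhiRho * rTensorAssoc R.coact H (R.coact b) = id[B]⊗Q.comul (R.coact b) * R.PhiRho :=
  R.coact_coassoc b

theorem rTensorAssoc_coact_coact (b : B) :
    rTensorAssoc R.coact H (R.coact b)
      = R.PhiRhoInv * id[B]⊗Q.comul (R.coact b) * R.PhiRho := by
  rw [mul_assoc, ← R.PhiRho_mul_rTensorAssoc_coact, ← mul_assoc, R.inv_mul_PhiRho, one_mul]

theorem lTensor_counitLeft_PhiRho : id[B]⊗(Q.counitLeft H) R.PhiRho = 1 := by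
  rw [QuasiBialgebra.counitLeft, Algebra.TensorProduct.map_id_comp, AlgHom.comp_apply,
    R.counit_PhiRho_mid, map_one]

theorem lTensor_counitRight_PhiRhoInv : id[B]⊗(Q.counitRight H) R.PhiRhoInv = 1 := by
  have lTensor_counitRight_PhiRho : id[B]⊗(Q.counitRight H) R.PhiRho = 1 := by
    rw [QuasiBialgebra.counitRight, Algebra.TensorProduct.map_id_comp, AlgHom.comp_apply,
      R.counit_PhiRho_right, map_one]
  simpa [lTensor_counitRight_PhiRho] using congrArg id[B]⊗(Q.counitRight H) R.PhiRho_mul_inv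

theorem lTensor_counitLeft_PhiRho_mul_rTensorAssoc (t : B ⊗[k] H) :
    id[B]⊗(Q.counitLeft H) (R.PhiRho * rTensorAssoc R.coact H t) = t := by
  rw [map_mul, R.lTensor_counitLeft_PhiRho, one_mul,
    Q.lTensor_counitLeft_rTensorAssoc R.counitRight_coact]

theorem rTensorAssoc_PhiRho_mul_rTensorAssoc_tmul_one (b : B) :
    rTensorAssoc R.coact (H ⊗[k] H) (R.PhiRho * rTensorAssoc R.coact H (b ⊗ₜ 1))
      = id[B]⊗(id[H]⊗Q.comul) R.PhiRhoInv * (1 ⊗ₜ Q.Phi)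
          * id[B]⊗(rTensorAssoc Q.comul H) (R.PhiRho * rTensorAssoc R.coact H (b ⊗ₜ 1))
          * id[B]⊗(id[H]⊗includeLeft) R.PhiRho := by
  have pentagon : (1 ⊗ₜ Q.Phi) * id[B]⊗(rTensorAssoc Q.comul H) R.PhiRho
        * id[B]⊗(id[H]⊗includeLeft) R.PhiRho
      = id[B]⊗(id[H]⊗Q.comul) R.PhiRho * rTensorAssoc R.coact (H ⊗[k] H) R.PhiRho :=
    R.pentagon
  have lTensor_inv_mul :
      id[B]⊗(id[H]⊗Q.comul) R.PhiRhoInv * id[B]⊗(id[H]⊗Q.comul) R.PhiRho = 1 := by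
    rw [← map_mul, R.inv_mul_PhiRho, map_one]
  have rTensorAssoc_comul_includeLeft (t : B ⊗[k] H) :
      id[B]⊗(id[H]⊗includeLeft) (id[B]⊗Q.comul t)
        = id[B]⊗(rTensorAssoc Q.comul H) (id[B]⊗includeLeft t) := by
    induction t with
    | zero => simp
    | add s t hs ht => simp only [map_add, hs, ht]
    | tmul b h => simp [rTensorAssoc_tmul_one]
  have coassoc : id[B]⊗(id[H]⊗includeLeft) R.PhiRho
        * rTensorAssoc R.coact (H ⊗[k] H) (rTensorAssoc R.coact H (b ⊗ₜ 1))
      = id[B]⊗(rTensorAssoc Q.comul H) (rTensorAssoc R.coact H (b ⊗ₜ 1))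
        * id[B]⊗(id[H]⊗includeLeft) R.PhiRho := by
    rw [rTensorAssoc_tmul_one, ← lTensor_lTensor_rTensorAssoc, ← map_mul,
      R.PhiRho_mul_rTensorAssoc_coact, map_mul, rTensorAssoc_comul_includeLeft]
  calc rTensorAssoc R.coact (H ⊗[k] H) (R.PhiRho * rTensorAssoc R.coact H (b ⊗ₜ 1))
      = id[B]⊗(id[H]⊗Q.comul) R.PhiRhoInv
          * (id[B]⊗(id[H]⊗Q.comul) R.PhiRho * rTensorAssoc R.coact (H ⊗[k] H) R.PhiRho)
          * rTensorAssoc R.coact (H ⊗[k] H) (rTensorAssoc R.coact H (b ⊗ₜ 1)) := by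
        rw [← mul_assoc, lTensor_inv_mul, one_mul, map_mul]
    _ = _ := by
        rw [← pentagon, map_mul id[B]⊗(rTensorAssoc Q.comul H)]
        simp only [mul_assoc, coassoc]

end RightComoduleAlgebra

end ComoduleAlgebra

section Projection

variable {Q : QuasiHopfAlgebra k H} {R : RightComoduleAlgebra Q.toQuasiBialgebra B}
  {v : H →ₐ[k] B} {E : B →ₗ[k] B}

/-- The map `Ψ`, that is `b ⊗ h ↦ b v(h)`, on all of `B ⊗ H`. -/
noncomputable def smashMap (v : H →ₐ[k] B) : B ⊗[k] H →ₗ[k] B :=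
  LinearMap.mul' k B ∘ₗ v.toLinearMap.lTensor B

@[simp]
theorem smashMap_tmul (v : H →ₐ[k] B) (b : B) (h : H) : smashMap v (b ⊗ₜ h) = b * v h := by
  simp [smashMap]

/-- The map `Ψ ⊗ id`, that is `b ⊗ h ⊗ x ↦ b v(h) ⊗ x`. -/
noncomputable def smashMapRTensor (v : H →ₐ[k] B) (X : Type*) [Ring X] [Algebra k X] :
    B ⊗[k] (H ⊗[k] X) →ₗ[k] B ⊗[k] X :=
  (smashMap v).rTensor X ∘ₗ (TensorProduct.assoc k B H X).symm.toLinearMap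

@[simp]
theorem smashMapRTensor_tmul (v : H →ₐ[k] B) (b : B) (h : H) (x : X) :
    smashMapRTensor v X (b ⊗ₜ (h ⊗ₜ x)) = (b * v h) ⊗ₜ x := by
  simp [smashMapRTensor]

/-- The projection `E` of the theorem in closed form: as `Φ_ρ = v(X¹) ⊗ X² ⊗ X³`, it is
`b ↦ v(X¹) b₀ v(β S(X² b₁) α X³)`. -/
noncomputable def QuasiHopfAlgebra.canonicalProjection (Q : QuasiHopfAlgebra k H)
    (R : RightComoduleAlgebra Q.toQuasiBialgebra B) (v : H →ₐ[k] B) : B →ₗ[k] B :=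
  Q.contract v ∘ₗ LinearMap.mulLeft k R.PhiRho ∘ₗ (rTensorAssoc R.coact H).toLinearMap ∘ₗ
    (includeLeft : B →ₐ[k] B ⊗[k] H).toLinearMap

local notation "𝓔" => QuasiHopfAlgebra.canonicalProjection Q R v

theorem QuasiHopfAlgebra.canonicalProjection_apply (b : B) :
    𝓔 b = Q.contract v (R.PhiRho * rTensorAssoc R.coact H (b ⊗ₜ 1)) := by
  simp [QuasiHopfAlgebra.canonicalProjection]

theorem QuasiHopfAlgebra.contract_PhiRho_mul_rTensorAssoc (t : B ⊗[k] H) :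
    Q.contract v (R.PhiRho * rTensorAssoc R.coact H t) = smashMap v (LinearMap.rTensor H 𝓔 t) := by
  have contract_mul_one_tmul (T : B ⊗[k] (H ⊗[k] H)) (h : H) :
      Q.contract v (T * (1 ⊗ₜ (1 ⊗ₜ h))) = Q.contract v T * v h := by
    simpa [rTensorAssoc_one_tmul] using Q.contract_mul_map_rTensorAssoc_comul v T (1 ⊗ₜ h)
  induction t with
  | zero => simp
  | add s t hs ht => simp only [map_add, mul_add, hs, ht]
  | tmul b h =>
    have tmul_eq_mul : b ⊗ₜ[k] h = (b ⊗ₜ 1) * (1 ⊗ₜ h) := by simp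
    rw [tmul_eq_mul, map_mul (rTensorAssoc R.coact H), rTensorAssoc_one_tmul, ← mul_assoc,
      contract_mul_one_tmul, ← canonicalProjection_apply, ← tmul_eq_mul,
      LinearMap.rTensor_tmul, smashMap_tmul]

theorem QuasiHopfAlgebra.smashMap_rTensor_coact_mul (b c : B) :
    smashMap v (LinearMap.rTensor H 𝓔 (R.coact c * (b ⊗ₜ 1))) = c * 𝓔 b := by
  rw [← contract_PhiRho_mul_rTensorAssoc, map_mul (rTensorAssoc R.coact H), ← mul_assoc,
    R.PhiRho_mul_rTensorAssoc_coact, mul_assoc, Q.contract_lTensor_comul_mul, R.counitRight_coact,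
    canonicalProjection_apply]

open QuasiHopfAlgebra

namespace IsComodAlgMorphismFromH

variable (hv : IsComodAlgMorphismFromH R v)
include hv

theorem rTensorAssoc_coact_map (u : H ⊗[k] X) :
    rTensorAssoc R.coact X (Algebra.TensorProduct.map v (AlgHom.id k X) u)
      = Algebra.TensorProduct.map v (AlgHom.id k (H ⊗[k] X)) (rTensorAssoc Q.comul X u) := by
  have assoc_map (w : H ⊗[k] H) (x : X) :
      Algebra.TensorProduct.assoc k k k B H X
          (Algebra.TensorProduct.map v (AlgHom.id k H) w ⊗ₜ x)
        = Algebra.TensorProduct.map v (AlgHom.id k (H ⊗[k] X))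
          (Algebra.TensorProduct.assoc k k k H H X (w ⊗ₜ x)) := by
    induction w with
    | zero => simp
    | add w w' hw hw' => simp only [map_add, TensorProduct.add_tmul, hw, hw']
    | tmul h g => simp
  induction u with
  | zero => simp
  | add u u' hu hu' => simp only [map_add, hu, hu']
  | tmul h x =>
    rw [Algebra.TensorProduct.map_tmul, rTensorAssoc_tmul, hv.1, assoc_map, ← rTensorAssoc_tmul,
      AlgHom.id_apply]

theorem canonicalProjection_mul_map (b : B) (h : H) : 𝓔 (b * v h) = Q.counit h • 𝓔 b := by
  have mul_tmul_one : (b * v h) ⊗ₜ[k] (1 : H)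
      = b ⊗ₜ 1 * Algebra.TensorProduct.map v (AlgHom.id k H) (h ⊗ₜ 1) := by simp
  rw [canonicalProjection_apply, mul_tmul_one, map_mul (rTensorAssoc R.coact H),
    hv.rTensorAssoc_coact_map, ← mul_assoc,
    Q.contract_mul_map_rTensorAssoc_comul, ← canonicalProjection_apply]
  simp

theorem canonicalProjection_one : 𝓔 1 = 1 := by
  rw [canonicalProjection_apply, ← Algebra.TensorProduct.one_def, map_one, mul_one, hv.2,
    Q.contract_map_Phi]

theorem canonicalProjection_smashMap (t : B ⊗[k] H) :
    𝓔 (smashMap v t) = 𝓔 (Q.counitRight B t) := by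
  induction t with
  | zero => simp
  | add s t hs ht => simp only [map_add, hs, ht]
  | tmul b h => simp [hv.canonicalProjection_mul_map]

theorem smashMap_rTensor_coact (b : B) : smashMap v (LinearMap.rTensor H 𝓔 (R.coact b)) = b := by
  simpa [hv.canonicalProjection_one, ← Algebra.TensorProduct.one_def] using
    smashMap_rTensor_coact_mul (R := R) (v := v) 1 b

theorem canonicalProjection_canonicalProjection (b : B) : 𝓔 (𝓔 b) = 𝓔 b := by
  simpa [hv.canonicalProjection_smashMap, Q.counitRight_rTensor, R.counitRight_coact] using
    congrArg 𝓔 (hv.smashMap_rTensor_coact b)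

theorem canonicalProjection_mul_canonicalProjection (b c : B) : 𝓔 (c * 𝓔 b) = 𝓔 (c * b) := by
  rw [← smashMap_rTensor_coact_mul, hv.canonicalProjection_smashMap, Q.counitRight_rTensor,
    hv.canonicalProjection_canonicalProjection, map_mul, R.counitRight_coact]
  simp

theorem rTensor_canonicalProjection_mul_map (T : B ⊗[k] X) (U : H ⊗[k] X) :
    LinearMap.rTensor X 𝓔 (T * Algebra.TensorProduct.map v (AlgHom.id k X) U)
      = LinearMap.rTensor X 𝓔 (T * (1 ⊗ₜ Q.counitLeft X U)) := by
  induction T with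
  | zero => simp
  | add S T hS hT => simp only [map_add, add_mul, hS, hT]
  | tmul b x =>
    induction U with
    | zero => simp
    | add U V hU hV => simp only [map_add, mul_add, TensorProduct.tmul_add, hU, hV]
    | tmul h y => simp [hv.canonicalProjection_mul_map, TensorProduct.smul_tmul']

theorem rTensor_canonicalProjection_mul_lTensor_PhiRho (f : H ⊗[k] H →ₐ[k] X) (T : B ⊗[k] X) :
    LinearMap.rTensor X 𝓔 (T * id[B]⊗f R.PhiRho) = LinearMap.rTensor X 𝓔 T := by
  have lTensor_map (u : H ⊗[k] (H ⊗[k] H)) :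
      id[B]⊗f (Algebra.TensorProduct.map v (AlgHom.id k _) u)
        = Algebra.TensorProduct.map v (AlgHom.id k X) (id[H]⊗f u) := by
    rw [← AlgHom.comp_apply, ← AlgHom.comp_apply, ← Algebra.TensorProduct.map_comp,
      ← Algebra.TensorProduct.map_comp]
    rfl
  rw [hv.2, lTensor_map, hv.rTensor_canonicalProjection_mul_map, Q.counitLeft_lTensor,
    Q.counitLeft_Phi, map_one, ← Algebra.TensorProduct.one_def, mul_one]

theorem rTensor_canonicalProjection_mul_rTensor (s t : B ⊗[k] X) :
    LinearMap.rTensor X 𝓔 (s * LinearMap.rTensor X 𝓔 t) = LinearMap.rTensor X 𝓔 (s * t) := by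
  induction s with
  | zero => simp
  | add s s' hs hs' => simp only [map_add, add_mul, hs, hs']
  | tmul b x =>
    induction t with
    | zero => simp
    | add t t' ht ht' => simp only [map_add, mul_add, ht, ht']
    | tmul c y => simp [hv.canonicalProjection_mul_canonicalProjection]

theorem rTensor_coact_canonicalProjection (b : B) :
    LinearMap.rTensor H 𝓔 (R.coact (𝓔 b)) = 𝓔 b ⊗ₜ 1 := by
  have rTensor_coact_contract (T : B ⊗[k] (H ⊗[k] H)) :
      LinearMap.rTensor H 𝓔 (R.coact (Q.contract v T))
        = TensorProduct.map 𝓔 (Q.contract (AlgHom.id k H))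
            (rTensorAssoc R.coact (H ⊗[k] H) T) := by
    induction T with
    | zero => simp
    | add S T hS hT => simp only [map_add, hS, hT]
    | tmul b u =>
      rw [Q.contract_tmul, map_mul R.coact, hv.1, hv.rTensor_canonicalProjection_mul_map,
        Q.counitLeft_comul, rTensorAssoc_tmul]
      induction R.coact b with
      | zero => simp
      | add s t hs ht => simp only [map_add, add_mul, TensorProduct.add_tmul, hs, ht]
      | tmul c h => simp
  have map_contract_mul_lTensor_PhiRho (T : B ⊗[k] (H ⊗[k] (H ⊗[k] H))) :
      TensorProduct.map 𝓔 (Q.contract (AlgHom.id k H))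
          (T * id[B]⊗(id[H]⊗includeLeft) R.PhiRho)
        = TensorProduct.map 𝓔 (Q.contract (AlgHom.id k H)) T := by
    rw [← LinearMap.lTensor_comp_rTensor, LinearMap.comp_apply,
      hv.rTensor_canonicalProjection_mul_lTensor_PhiRho, LinearMap.comp_apply]
  rw [canonicalProjection_apply, rTensor_coact_contract,
    R.rTensorAssoc_PhiRho_mul_rTensorAssoc_tmul_one, map_contract_mul_lTensor_PhiRho,
    map_lTensor_mul_one_tmul_mul_lTensor _
      Q.contract_id_lTensor_comul_mul_Phi_mul_rTensorAssoc,
    R.lTensor_counitLeft_PhiRho_mul_rTensorAssoc, R.lTensor_counitRight_PhiRhoInv, one_mul,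
    LinearMap.rTensor_tmul, canonicalProjection_apply]

theorem smashMapRTensor_rTensor_rTensorAssoc (t : B ⊗[k] X) :
    smashMapRTensor v X (LinearMap.rTensor (H ⊗[k] X) 𝓔 (rTensorAssoc R.coact X t)) = t := by
  have smashMapRTensor_rTensor_assoc (w : B ⊗[k] H) (x : X) :
      smashMapRTensor v X (LinearMap.rTensor (H ⊗[k] X) 𝓔
          (Algebra.TensorProduct.assoc k k k B H X (w ⊗ₜ x)))
        = smashMap v (LinearMap.rTensor H 𝓔 w) ⊗ₜ x := by
    induction w with
    | zero => simp
    | add w w' hw hw' => simp only [map_add, TensorProduct.add_tmul, hw, hw']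
    | tmul b h => simp
  induction t with
  | zero => simp
  | add s t hs ht => simp only [map_add, hs, ht]
  | tmul b x =>
    rw [rTensorAssoc_tmul, smashMapRTensor_rTensor_assoc, hv.smashMap_rTensor_coact]

theorem coact_canonicalProjection (b : B) :
    R.coact (𝓔 b) = smashMapRTensor v H
      (LinearMap.rTensor (H ⊗[k] H) 𝓔 (R.PhiRhoInv * (𝓔 b ⊗ₜ 1))) := by
  have rTensor_lTensor_comul (t : B ⊗[k] H) :
      LinearMap.rTensor (H ⊗[k] H) 𝓔 (id[B]⊗Q.comul t)
        = id[B]⊗Q.comul (LinearMap.rTensor H 𝓔 t) := by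
    induction t with
    | zero => simp
    | add s t hs ht => simp only [map_add, hs, ht]
    | tmul b h => simp
  have rTensor_canonicalProjection_mul_PhiRho (T : B ⊗[k] (H ⊗[k] H)) :
      LinearMap.rTensor (H ⊗[k] H) 𝓔 (T * R.PhiRho) = LinearMap.rTensor (H ⊗[k] H) 𝓔 T := by
    simpa using hv.rTensor_canonicalProjection_mul_lTensor_PhiRho (AlgHom.id k (H ⊗[k] H)) T
  rw [← hv.smashMapRTensor_rTensor_rTensorAssoc (R.coact (𝓔 b)), R.rTensorAssoc_coact_coact,
    rTensor_canonicalProjection_mul_PhiRho, ← hv.rTensor_canonicalProjection_mul_rTensor,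
    rTensor_lTensor_comul, hv.rTensor_coact_canonicalProjection, Algebra.TensorProduct.map_tmul,
    map_one, AlgHom.id_apply]

theorem PhiRhoInv_eq :
    R.PhiRhoInv = Algebra.TensorProduct.map v (AlgHom.id k (H ⊗[k] H)) Q.PhiInv :=
  left_inv_eq_right_inv R.inv_mul_PhiRho <| by rw [hv.2, ← map_mul, Q.Phi_mul_inv, map_one]

theorem coact_canonicalProjection_eq_sum (b : B) {n : ℕ} {x y z : Fin n → H}
    (hxyz : Q.PhiInv = ∑ i, x i ⊗ₜ[k] (y i ⊗ₜ[k] z i)) :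
    R.coact (𝓔 b) = ∑ i, (𝓔 (v (x i) * 𝓔 b) * v (y i)) ⊗ₜ[k] z i := by
  simp [hv.coact_canonicalProjection b, hv.PhiRhoInv_eq, hxyz, Finset.sum_mul]

theorem canonicalProjection_mul_map_mul_canonicalProjection (b c : B) (h : H) :
    𝓔 b * v h * 𝓔 c = smashMap v (LinearMap.rTensor H 𝓔
      (R.coact (𝓔 b) * Algebra.TensorProduct.map v (AlgHom.id k H) (Q.comul h) * (𝓔 c ⊗ₜ 1))) := by
  rw [← hv.1, ← map_mul, smashMap_rTensor_coact_mul, hv.canonicalProjection_canonicalProjection]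

theorem canonicalProjection_mul_map_mul_eq_sum (b c : B) (h : H) {n m : ℕ}
    {x y z : Fin n → H} (hxyz : Q.PhiInv = ∑ i, x i ⊗ₜ[k] (y i ⊗ₜ[k] z i))
    {d e : Fin m → H} (hde : Q.comul h = ∑ j, d j ⊗ₜ[k] e j) :
    𝓔 b * v h * 𝓔 c
      = ∑ i, ∑ j, 𝓔 (𝓔 (v (x i) * 𝓔 b) * 𝓔 (v (y i * d j) * 𝓔 c)) * v (z i * e j) := by
  rw [hv.canonicalProjection_mul_map_mul_canonicalProjection,
    hv.coact_canonicalProjection_eq_sum b hxyz, hde, map_sum, Finset.sum_mul_sum]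
  simp [Finset.sum_mul, hv.canonicalProjection_mul_canonicalProjection, mul_assoc]

end IsComodAlgMorphismFromH

theorem IsCanonicalProjection.eq_canonicalProjection (hE : IsCanonicalProjection Q R v E)
    (hv : IsComodAlgMorphismFromH R v) : E = 𝓔 := by
  ext b
  obtain ⟨n, x, y, z, hxyz⟩ := exists_eq_sum_tmul_tmul Q.Phi
  obtain ⟨m, c, d, hcd⟩ := TensorProduct.exists_sum_tmul_eq (R.coact b)
  rw [hE b n x y z hxyz m c d hcd, canonicalProjection_apply, rTensorAssoc_tmul_one, hv.2, hxyz,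
    hcd]
  simp [Finset.sum_mul_sum, Q.S_mul, Q.S_Sinv, mul_assoc]

end Projection

end Development

/-- `Ψ` is multiplicative: `((x¹▷a)*(x²h₁▷a'))·v(x³h₂h') = a v(h) a' v(h')`, where
`*` is the multiplication `a * a' = E(aa')` of the coinvariants and `▷` the action
`h ▷ b = E(v(h)b)`. -/
theorem statement12 {k H B : Type*} [Field k] [Ring H] [Algebra k H]
    [Ring B] [Algebra k B] (Q : QuasiHopfAlgebra k H)
    (R : RightComoduleAlgebra Q.toQuasiBialgebra B)
    (v : H →ₐ[k] B) (hv : IsComodAlgMorphismFromH R v)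
    (E : B →ₗ[k] B) (hE : IsCanonicalProjection Q R v E) :
    ∀ a ∈ LinearMap.range E, ∀ a' ∈ LinearMap.range E, ∀ (h h' : H)
      (n : ℕ) (x1 x2 x3 : Fin n → H),
      Q.PhiInv = ∑ i, x1 i ⊗ₜ[k] (x2 i ⊗ₜ[k] x3 i) →
      ∀ (m : ℕ) (d1 d2 : Fin m → H), Q.comul h = ∑ j, d1 j ⊗ₜ[k] d2 j →
      (∑ i, ∑ j, E (E (v (x1 i) * a) * E (v (x2 i * d1 j) * a'))
          * v (x3 i * d2 j * h'))
        = a * v h * (a' * v h') := by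
  rintro _ ⟨b, rfl⟩ _ ⟨c, rfl⟩ h h' n x y z hxyz m d e hde
  obtain rfl := hE.eq_canonicalProjection hv
  rw [← mul_assoc, hv.canonicalProjection_mul_map_mul_eq_sum b c h hxyz hde]
  simp_rw [Finset.sum_mul, map_mul v, mul_assoc]
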